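/- arXiv:2505.16111 — 2 statements merged into one kernel-verified Lean document; each statement's English description precedes it below -/
import Mathlib

section
/- Let φ = (φ₁, φ₂) be a pair of N-functions, 1 ≤ p < ∞ and 1/p + 1/q = 1. If T = (T₁, T₂) ∈ ⊕_{j=1}^{2} S_{φ_j,p} with ‖T‖_{(φ),p} ≠ 0, then υ(φ(T / ‖T‖_{(φ),p})) = tr(φ₁(T₁/‖T‖_{(φ),p})) + tr(φ₂(T₂/‖T‖_{(φ),p})) ≤ 2^{1 − 1/p} = 2^{1/q}. -/
open scoped InnerProductSpace ENNReal Topology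
open Filter

/-- An Orlicz function (N-function): convex, nondecreasing and continuous on `[0, ∞)`,
vanishing at `0`, positive on `(0, ∞)` and tending to `∞` at `∞`. -/
structure OrliczFunction : Type where
  toFun : ℝ → ℝ
  convexOn : ConvexOn ℝ (Set.Ici (0 : ℝ)) toFun
  monotoneOn : MonotoneOn toFun (Set.Ici (0 : ℝ))
  continuousOn : ContinuousOn toFun (Set.Ici (0 : ℝ))
  map_zero : toFun 0 = 0
  pos : ∀ x : ℝ, 0 < x → 0 < toFun x
  tendsto_atTop : Filter.Tendsto toFun Filter.atTop Filter.atTop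

/-- `ψ` is the complementary N-function of `φ`: `ψ(y) = sup {x·y − φ(x) : x ≥ 0}`. -/
def OrliczFunction.IsComplementary (φ ψ : OrliczFunction) : Prop :=
  ∀ y : ℝ, 0 ≤ y → ψ.toFun y = sSup {v : ℝ | ∃ x : ℝ, 0 ≤ x ∧ v = x * y - φ.toFun x}

/-- `g` is the (two-sided) inverse of `f` on `[0, ∞)`, taking nonnegative values. -/
def IsOrliczInverse (g f : ℝ → ℝ) : Prop :=
  (∀ u : ℝ, 0 ≤ u → 0 ≤ g u) ∧ (∀ u : ℝ, 0 ≤ u → f (g u) = u) ∧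
    ∀ u : ℝ, 0 ≤ u → g (f u) = u

variable {H : Type} [NormedAddCommGroup H] [InnerProductSpace ℂ H] [CompleteSpace H]

/-- The `n`-th singular value of an operator `T` (indexed from `n = 0`), described as the
`n`-th approximation number: the distance from `T` to the operators of rank `≤ n`.  For a
compact operator on a Hilbert space this is exactly the `(n+1)`-st eigenvalue of
`|T| = (T*T)^(1/2)` in decreasing order. -/
noncomputable def sValue (T : H →L[ℂ] H) (n : ℕ) : ℝ :=
  sInf {c : ℝ | ∃ F : H →L[ℂ] H,
    Module.rank ℂ (LinearMap.range F.toLinearMap) ≤ (n : Cardinal) ∧ c = ‖T - F‖}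

/-- `tr(φ(|T|)) = Σ_n φ(s_n(T))`. -/
noncomputable def orliczSum (φ : OrliczFunction) (T : H →L[ℂ] H) : ℝ :=
  ∑' n : ℕ, φ.toFun (sValue T n)

/-- Membership in the noncommutative Orlicz sequence space `S_φ(H)`:
`T` is compact and `Σ_n φ(λ s_n(T)) < ∞` for some `λ > 0`. -/
def MemS (φ : OrliczFunction) (T : H →L[ℂ] H) : Prop :=
  IsCompactOperator (⇑T) ∧
    ∃ l : ℝ, 0 < l ∧ Summable fun n : ℕ => φ.toFun (l * sValue T n)

/-- The Luxemburg norm `‖T‖_(φ) = inf {λ > 0 : Σ_n φ(s_n(T)/λ) ≤ 1}`. -/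
noncomputable def luxNorm (φ : OrliczFunction) (T : H →L[ℂ] H) : ℝ :=
  sInf {l : ℝ | 0 < l ∧ (Summable fun n : ℕ => φ.toFun (sValue T n / l)) ∧
    ∑' n : ℕ, φ.toFun (sValue T n / l) ≤ 1}

/-- The Orlicz norm `‖T‖_φ = sup {tr |TB| : tr(ψ(B)) ≤ 1}`, expressed through the
complementary function `ψ` of `φ` (here `tr|TB| = Σ_n s_n(TB)`). -/
noncomputable def orlNormVia (ψ : OrliczFunction) (T : H →L[ℂ] H) : ℝ :=
  sSup {c : ℝ | ∃ B : H →L[ℂ] H, IsCompactOperator (⇑B) ∧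
    (Summable fun n : ℕ => ψ.toFun (sValue B n)) ∧
    (∑' n : ℕ, ψ.toFun (sValue B n)) ≤ 1 ∧ c = ∑' n : ℕ, sValue (T ∘L B) n}

/-- The norm `‖T‖_((φ),p) = (‖T₁‖_(φ₁)^p + ‖T₂‖_(φ₂)^p)^(1/p)` on 2-tuples. -/
noncomputable def luxNorm2 (φ₁ φ₂ : OrliczFunction) (p : ℝ) (T₁ T₂ : H →L[ℂ] H) : ℝ :=
  (luxNorm φ₁ T₁ ^ p + luxNorm φ₂ T₂ ^ p) ^ (1 / p)

/-- The Orlicz-type norm `‖T‖_(φ,p) = (‖T₁‖_φ₁^p + ‖T₂‖_φ₂^p)^(1/p)` on 2-tuples,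
where the Orlicz norms are computed via the complementary functions `ψ₁, ψ₂`. -/
noncomputable def orlNorm2 (ψ₁ ψ₂ : OrliczFunction) (p : ℝ) (T₁ T₂ : H →L[ℂ] H) : ℝ :=
  (orlNormVia ψ₁ T₁ ^ p + orlNormVia ψ₂ T₂ ^ p) ^ (1 / p)

/-- 2-tuple Luxemburg norm for an exponent `r ∈ [1, ∞]`. -/
noncomputable def luxNorm2E (φ₁ φ₂ : OrliczFunction) (r : ℝ≥0∞) (T₁ T₂ : H →L[ℂ] H) : ℝ :=
  if r = ⊤ then max (luxNorm φ₁ T₁) (luxNorm φ₂ T₂)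
  else (luxNorm φ₁ T₁ ^ r.toReal + luxNorm φ₂ T₂ ^ r.toReal) ^ (1 / r.toReal)

/-- The trace of an operator, computed along a Hilbert basis. -/
noncomputable def traceAlong {ι : Type} (b : HilbertBasis ι ℂ H) (T : H →L[ℂ] H) : ℂ :=
  ∑' i : ι, ⟪b i, T (b i)⟫_ℂ

/-- The Schatten `p`-norm `‖T‖_p = (Σ_n s_n(T)^p)^(1/p)`. -/
noncomputable def schattenNorm (p : ℝ) (T : H →L[ℂ] H) : ℝ :=
  (∑' n : ℕ, sValue T n ^ p) ^ (1 / p)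

/-- Membership in the Schatten class `S_p(H)`. -/
def MemSp (p : ℝ) (T : H →L[ℂ] H) : Prop :=
  IsCompactOperator (⇑T) ∧ Summable fun n : ℕ => sValue T n ^ p

/-- The nonsquare constant `J` of the noncommutative Orlicz space `S_φ(H)`
(with the Luxemburg norm). -/
noncomputable def JOrlicz (φ : OrliczFunction) : ℝ :=
  sSup {c : ℝ | ∃ T B : H →L[ℂ] H, MemS φ T ∧ MemS φ B ∧
    luxNorm φ T = 1 ∧ luxNorm φ B = 1 ∧
    c = min (luxNorm φ (T + B)) (luxNorm φ (T - B))}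

/-- The von Neumann–Jordan constant of `S_φ(H)` (with the Luxemburg norm): the smallest
`c > 0` such that `1/c ≤ (‖x+y‖² + ‖x−y‖²)/(2(‖x‖² + ‖y‖²)) ≤ c` for all `x, y` in
`S_φ(H)` not both zero. -/
noncomputable def cNJOrlicz (φ : OrliczFunction) : ℝ :=
  sInf {c : ℝ | 0 < c ∧ ∀ T B : H →L[ℂ] H, MemS φ T → MemS φ B → ¬(T = 0 ∧ B = 0) →
    1 / c ≤ (luxNorm φ (T + B) ^ 2 + luxNorm φ (T - B) ^ 2) /
        (2 * (luxNorm φ T ^ 2 + luxNorm φ B ^ 2)) ∧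
      (luxNorm φ (T + B) ^ 2 + luxNorm φ (T - B) ^ 2) /
        (2 * (luxNorm φ T ^ 2 + luxNorm φ B ^ 2)) ≤ c}

/-- The von Neumann–Jordan constant of the Schatten class `S_p(H)`. -/
noncomputable def cNJSchatten (p : ℝ) : ℝ :=
  sInf {c : ℝ | 0 < c ∧ ∀ T B : H →L[ℂ] H, MemSp p T → MemSp p B → ¬(T = 0 ∧ B = 0) →
    1 / c ≤ (schattenNorm p (T + B) ^ 2 + schattenNorm p (T - B) ^ 2) /
        (2 * (schattenNorm p T ^ 2 + schattenNorm p B ^ 2)) ∧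
      (schattenNorm p (T + B) ^ 2 + schattenNorm p (T - B) ^ 2) /
        (2 * (schattenNorm p T ^ 2 + schattenNorm p B ^ 2)) ≤ c}

namespace OrliczFunction

lemma nonneg (φ : OrliczFunction) {x : ℝ} (hx : 0 ≤ x) : 0 ≤ φ.toFun x := by
  rcases hx.eq_or_lt with rfl | hx
  · exact φ.map_zero.ge
  · exact (φ.pos x hx).le

/-- A convex function vanishing at `0` is star-shaped. -/
lemma map_mul_le (φ : OrliczFunction) {t x : ℝ} (ht : 0 ≤ t) (ht1 : t ≤ 1) (hx : 0 ≤ x) :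
    φ.toFun (t * x) ≤ t * φ.toFun x := by
  have h := φ.convexOn.2 (Set.mem_Ici.2 hx) (Set.mem_Ici.2 le_rfl) ht (sub_nonneg.2 ht1)
    (by ring)
  simpa [φ.map_zero] using h

lemma map_div_le (φ : OrliczFunction) {x l m : ℝ} (hx : 0 ≤ x) (hl : 0 < l) (hlm : l ≤ m) :
    φ.toFun (x / m) ≤ l / m * φ.toFun (x / l) := by
  have hm : 0 < m := hl.trans_le hlm
  have h := φ.map_mul_le (div_nonneg hl.le hm.le) ((div_le_one hm).2 hlm)
    (div_nonneg hx hl.le)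
  rwa [show l / m * (x / l) = x / m by field_simp] at h

end OrliczFunction

section

variable {H : Type} [NormedAddCommGroup H] [InnerProductSpace ℂ H]

lemma sValue_nonneg (T : H →L[ℂ] H) (n : ℕ) : 0 ≤ sValue T n := by
  apply Real.sInf_nonneg
  rintro c ⟨F, -, rfl⟩
  exact norm_nonneg _

lemma sValue_smul_le (c : ℂ) (T : H →L[ℂ] H) (n : ℕ) :
    sValue (c • T) n ≤ ‖c‖ * sValue T n := by
  have hne : {r : ℝ | ∃ F : H →L[ℂ] H,
      Module.rank ℂ (LinearMap.range F.toLinearMap) ≤ (n : Cardinal) ∧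
        r = ‖T - F‖}.Nonempty := by
    refine ⟨_, 0, ?_, rfl⟩
    simp
  rw [sValue, sValue, ← smul_eq_mul, ← Real.sInf_smul_of_nonneg (norm_nonneg c)]
  refine le_csInf hne.smul_set ?_
  rintro _ ⟨_, ⟨F, hF, rfl⟩, rfl⟩
  refine csInf_le ⟨0, ?_⟩ ⟨c • F, ?_, ?_⟩
  · rintro _ ⟨G, -, rfl⟩
    exact norm_nonneg _
  · exact (Submodule.rank_mono (LinearMap.range_smul_le_range F.toLinearMap c)).trans hF
  · simp only [smul_eq_mul]
    rw [← smul_sub, norm_smul]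

lemma luxNorm_nonneg (φ : OrliczFunction) (T : H →L[ℂ] H) : 0 ≤ luxNorm φ T :=
  Real.sInf_nonneg fun _ hl => hl.1.le

/-- For `T ∈ S_φ(H)` the infimum defining the Luxemburg norm is over a nonempty set. -/
lemma MemS.exists_tsum_le_one {φ : OrliczFunction} {T : H →L[ℂ] H} (hT : MemS φ T) :
    {l : ℝ | 0 < l ∧ (Summable fun n : ℕ => φ.toFun (sValue T n / l)) ∧
      ∑' n : ℕ, φ.toFun (sValue T n / l) ≤ 1}.Nonempty := by
  obtain ⟨-, l, hl, hs⟩ := hT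
  set S := ∑' n : ℕ, φ.toFun (l * sValue T n) with hS
  have hS0 : 0 ≤ S :=
    tsum_nonneg fun n => φ.nonneg (mul_nonneg hl.le (sValue_nonneg T n))
  have hS1 : 0 < 1 + S := by positivity
  have hle : ∀ n, φ.toFun (sValue T n / ((1 + S) / l)) ≤
      (1 + S)⁻¹ * φ.toFun (l * sValue T n) := fun n => by
    have h := φ.map_mul_le (inv_nonneg.2 hS1.le) (inv_le_one_of_one_le₀ (by linarith))
      (mul_nonneg hl.le (sValue_nonneg T n))
    rwa [show (1 + S)⁻¹ * (l * sValue T n) = sValue T n / ((1 + S) / l) by field_simp] at h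
  have hsum := Summable.of_nonneg_of_le
    (fun n => φ.nonneg (div_nonneg (sValue_nonneg T n) (div_pos hS1 hl).le)) hle
    (hs.mul_left _)
  refine ⟨(1 + S) / l, div_pos hS1 hl, hsum, ?_⟩
  refine (hsum.tsum_le_tsum hle (hs.mul_left _)).trans ?_
  rw [tsum_mul_left, ← hS, inv_mul_le_iff₀ hS1]
  linarith

lemma sum_map_sValue_div_le {φ : OrliczFunction} {T : H →L[ℂ] H} (hT : MemS φ T) {N : ℝ}
    (hN : 0 < N) (hle : luxNorm φ T ≤ N) (u : Finset ℕ) :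
    ∑ n ∈ u, φ.toFun (sValue T n / N) ≤ luxNorm φ T / N := by
  set a := luxNorm φ T with ha
  have hM : ∀ l : ℝ, 0 < max l N := fun l => hN.trans_le (le_max_right _ _)
  have key : ∀ l, a < l → ∑ n ∈ u, φ.toFun (sValue T n / max l N) ≤ l / max l N := by
    intro l hl
    obtain ⟨m, ⟨hm, hs, h1⟩, hml⟩ := exists_lt_of_csInf_lt hT.exists_tsum_le_one hl
    calc ∑ n ∈ u, φ.toFun (sValue T n / max l N)
        ≤ ∑ n ∈ u, m / max l N * φ.toFun (sValue T n / m) :=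
          Finset.sum_le_sum fun n _ => φ.map_div_le (sValue_nonneg T n) hm
            (hml.le.trans (le_max_left _ _))
      _ = m / max l N * ∑ n ∈ u, φ.toFun (sValue T n / m) := by rw [Finset.mul_sum]
      _ ≤ m / max l N * 1 := by
          have := hs.sum_le_tsum u fun n _ => φ.nonneg (div_nonneg (sValue_nonneg T n) hm.le)
          exact mul_le_mul_of_nonneg_left (this.trans h1) (div_pos hm (hM l)).le
      _ ≤ l / max l N := by
          rw [mul_one]
          exact div_le_div_of_nonneg_right hml.le (hM l).le
  have hcont : Continuous fun l : ℝ => ∑ n ∈ u, φ.toFun (sValue T n / max l N) :=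
    continuous_finsetSum u fun n _ => φ.continuousOn.comp_continuous
      (continuous_const.div (continuous_id.max continuous_const) fun l => (hM l).ne')
      fun l => div_nonneg (sValue_nonneg T n) (hM l).le
  have hcont' : Continuous fun l : ℝ => l / max l N :=
    continuous_id.div (continuous_id.max continuous_const) fun l => (hM l).ne'
  have h := le_of_tendsto_of_tendsto (hcont.continuousWithinAt (s := Set.Ioi a) (x := a))
    (hcont'.continuousWithinAt (s := Set.Ioi a) (x := a))
    (eventually_nhdsWithin_of_forall key)
  simpa only [max_eq_right hle] using h

lemma orliczSum_inv_smul_le {φ : OrliczFunction} {T : H →L[ℂ] H} (hT : MemS φ T) {N : ℝ}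
    (hN : 0 < N) (hle : luxNorm φ T ≤ N) :
    orliczSum φ ((N : ℂ)⁻¹ • T) ≤ luxNorm φ T / N := by
  refine Real.tsum_le_of_sum_le (fun n => φ.nonneg (sValue_nonneg _ n)) fun u => ?_
  refine le_trans (Finset.sum_le_sum fun n _ => ?_) (sum_map_sValue_div_le hT hN hle u)
  refine φ.monotoneOn (sValue_nonneg _ n) (div_nonneg (sValue_nonneg T n) hN.le) ?_
  refine (sValue_smul_le _ T n).trans_eq ?_
  rw [norm_inv, Complex.norm_real, Real.norm_of_nonneg hN.le, inv_mul_eq_div]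

end

lemma Real.le_rpow_add_rpow {a b p : ℝ} (ha : 0 ≤ a) (hb : 0 ≤ b) (hp : 0 < p) :
    a ≤ (a ^ p + b ^ p) ^ (1 / p) := by
  rw [one_div, Real.le_rpow_inv_iff_of_pos ha (by positivity) hp]
  exact le_add_of_nonneg_right (by positivity)

lemma Real.add_le_two_rpow_mul_rpow_add_rpow {a b p : ℝ} (ha : 0 ≤ a) (hb : 0 ≤ b)
    (hp : 1 ≤ p) : a + b ≤ 2 ^ (1 - 1 / p) * (a ^ p + b ^ p) ^ (1 / p) := by
  have hp0 : 0 < p := by linarith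
  have h : (a + b) ^ p ≤ 2 ^ (p - 1) * (a ^ p + b ^ p) := by
    have := NNReal.rpow_add_le_mul_rpow_add_rpow ⟨a, ha⟩ ⟨b, hb⟩ hp
    exact_mod_cast this
  have h' := (Real.le_rpow_inv_iff_of_pos (by positivity) (by positivity) hp0).2 h
  rw [Real.mul_rpow (by positivity) (by positivity), ← Real.rpow_mul zero_le_two] at h'
  rwa [one_div, show 1 - p⁻¹ = (p - 1) * p⁻¹ by field_simp]

/-- if `‖T‖_((φ),p) ≠ 0` then
`υ(φ(T/‖T‖_((φ),p))) ≤ 2^(1 − 1/p) = 2^(1/q)`. -/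
theorem stmt4 {H : Type} [NormedAddCommGroup H] [InnerProductSpace ℂ H]
    [CompleteSpace H] [TopologicalSpace.SeparableSpace H]
    (φ₁ φ₂ : OrliczFunction) (p q : ℝ) (hp : 1 ≤ p) (hpq : 1 / p + 1 / q = 1)
    (T₁ T₂ : H →L[ℂ] H) (hT₁ : MemS φ₁ T₁) (hT₂ : MemS φ₂ T₂)
    (hN : luxNorm2 φ₁ φ₂ p T₁ T₂ ≠ 0) :
    orliczSum φ₁ (((luxNorm2 φ₁ φ₂ p T₁ T₂ : ℂ))⁻¹ • T₁) +
        orliczSum φ₂ (((luxNorm2 φ₁ φ₂ p T₁ T₂ : ℂ))⁻¹ • T₂) ≤ (2 : ℝ) ^ (1 - 1 / p) ∧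
      (2 : ℝ) ^ (1 - 1 / p) = (2 : ℝ) ^ (1 / q) := by
  have hp0 : 0 < p := by linarith
  have ha := luxNorm_nonneg φ₁ T₁
  have hb := luxNorm_nonneg φ₂ T₂
  refine ⟨?_, by rw [sub_eq_of_eq_add' hpq.symm]⟩
  set N := luxNorm2 φ₁ φ₂ p T₁ T₂ with hNdef
  have hNpos : 0 < N := lt_of_le_of_ne (by rw [hNdef, luxNorm2]; positivity) hN.symm
  have h₁ : luxNorm φ₁ T₁ ≤ N := Real.le_rpow_add_rpow ha hb hp0
  have h₂ : luxNorm φ₂ T₂ ≤ N := by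
    rw [hNdef, luxNorm2, add_comm]
    exact Real.le_rpow_add_rpow hb ha hp0
  refine (add_le_add (orliczSum_inv_smul_le hT₁ hNpos h₁)
    (orliczSum_inv_smul_le hT₂ hNpos h₂)).trans ?_
  rw [← add_div, div_le_iff₀ hNpos]
  exact Real.add_le_two_rpow_mul_rpow_add_rpow ha hb hp
end

section
/- For any Banach space X (with at least two linearly independent vectors), the nonsquare constant and the von Neumann–Jordan constant satisfy J(X)² ≤ 2 · c_NJ(X). -/
open scoped InnerProductSpace ENNReal Topology
open Filter

variable {H : Type} [NormedAddCommGroup H] [InnerProductSpace ℂ H] [CompleteSpace H]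

/-- The nonsquare constant `J(X) = sup {min(‖x+y‖, ‖x−y‖) : ‖x‖ = ‖y‖ = 1}`. -/
noncomputable def nonsquareConst (X : Type) [NormedAddCommGroup X] [NormedSpace ℝ X] : ℝ :=
  sSup {c : ℝ | ∃ x y : X, ‖x‖ = 1 ∧ ‖y‖ = 1 ∧ c = min ‖x + y‖ ‖x - y‖}

/-- The von Neumann–Jordan constant of a Banach space `X`: the smallest `c > 0` such that
`1/c ≤ (‖x+y‖² + ‖x−y‖²)/(2(‖x‖² + ‖y‖²)) ≤ c` for all `x, y ∈ X` not both zero. -/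
noncomputable def vNJConst (X : Type) [NormedAddCommGroup X] [NormedSpace ℝ X] : ℝ :=
  sInf {c : ℝ | 0 < c ∧ ∀ x y : X, ¬(x = 0 ∧ y = 0) →
    1 / c ≤ (‖x + y‖ ^ 2 + ‖x - y‖ ^ 2) / (2 * (‖x‖ ^ 2 + ‖y‖ ^ 2)) ∧
      (‖x + y‖ ^ 2 + ‖x - y‖ ^ 2) / (2 * (‖x‖ ^ 2 + ‖y‖ ^ 2)) ≤ c}

/-- The constant `2` is always admissible in the definition of the von Neumann–Jordan constant. -/
lemma vNJ_ratio_bounds {X : Type} [NormedAddCommGroup X] [NormedSpace ℝ X] (x y : X)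
    (h : ¬(x = 0 ∧ y = 0)) :
    1 / 2 ≤ (‖x + y‖ ^ 2 + ‖x - y‖ ^ 2) / (2 * (‖x‖ ^ 2 + ‖y‖ ^ 2)) ∧
      (‖x + y‖ ^ 2 + ‖x - y‖ ^ 2) / (2 * (‖x‖ ^ 2 + ‖y‖ ^ 2)) ≤ 2 := by
  have hpos : 0 < ‖x‖ ^ 2 + ‖y‖ ^ 2 := by
    rcases not_and_or.mp h with hx | hy
    · have := norm_pos_iff.mpr hx
      positivity
    · have := norm_pos_iff.mpr hy
      positivity
  have hx : 2 * ‖x‖ ≤ ‖x + y‖ + ‖x - y‖ := by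
    have := norm_add_le (x + y) (x - y)
    rwa [add_add_sub_cancel, ← two_smul ℝ x, norm_smul, Real.norm_two] at this
  have hy : 2 * ‖y‖ ≤ ‖x + y‖ + ‖x - y‖ := by
    have := norm_sub_le (x + y) (x - y)
    rwa [add_sub_sub_cancel, ← two_smul ℝ y, norm_smul, Real.norm_two] at this
  have hadd := norm_add_le x y
  have hsub := norm_sub_le x y
  have hx2 := pow_le_pow_left₀ (by positivity) hx 2
  have hy2 := pow_le_pow_left₀ (by positivity) hy 2
  have hadd2 := pow_le_pow_left₀ (norm_nonneg _) hadd 2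
  have hsub2 := pow_le_pow_left₀ (norm_nonneg _) hsub 2
  constructor
  · rw [div_le_div_iff₀ two_pos (by positivity)]
    nlinarith [sq_nonneg (‖x + y‖ - ‖x - y‖)]
  · rw [div_le_iff₀ (by positivity)]
    nlinarith [sq_nonneg (‖x‖ - ‖y‖)]

/-- for any Banach space `X` (with at least two linearly independent
vectors), `J(X)² ≤ 2 c_NJ(X)`. -/
theorem stmt13 (X : Type) [NormedAddCommGroup X] [NormedSpace ℝ X] [CompleteSpace X]
    (hX : ∃ x y : X, LinearIndependent ℝ ![x, y]) :
    nonsquareConst X ^ 2 ≤ 2 * vNJConst X := by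
  have hJ : 0 ≤ nonsquareConst X := by
    refine Real.sSup_nonneg ?_
    rintro _ ⟨x, y, -, -, rfl⟩
    positivity
  suffices h : nonsquareConst X ^ 2 / 2 ≤ vNJConst X by linarith
  refine le_csInf ⟨2, two_pos, vNJ_ratio_bounds⟩ ?_
  rintro c ⟨hc, hbound⟩
  have hle : nonsquareConst X ≤ √(2 * c) := by
    refine Real.sSup_le ?_ (Real.sqrt_nonneg _)
    rintro _ ⟨x, y, hx, hy, rfl⟩
    have hx0 : x ≠ 0 := norm_ne_zero_iff.mp (by simp [hx])
    have hr := (hbound x y fun h => hx0 h.1).2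
    rw [hx, hy, div_le_iff₀ (by norm_num)] at hr
    refine Real.le_sqrt_of_sq_le ?_
    have h₁ := pow_le_pow_left₀ (by positivity) (min_le_left ‖x + y‖ ‖x - y‖) 2
    have h₂ := pow_le_pow_left₀ (by positivity) (min_le_right ‖x + y‖ ‖x - y‖) 2
    linarith
  have := (Real.le_sqrt hJ (by positivity)).mp hle
  linarith
end
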